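/- Consider the semiparametric contextual bandit problem with two actions under the environment and boundedness assumptions, where at each round t the learner samples a_t from a distribution π_t that either places all mass on a single action or is uniform over the two actions, with π_t depending measurably on the history. Let γ(T) := √λ + √(9d·log(1 + T/(dλ)) + 18·log(T/δ)). Then for any δ ∈ (0,1), with probability at least 1 − δ, the orthogonalized estimator satisfies ‖θ̂_t − θ‖_{Γ_t} ≤ γ(T) simultaneously for all t ∈ [T]. -/

import Mathlib

open MeasureTheory ProbabilityTheory Matrix Finset

/-!
When `π_t` is uniform on a pair of actions, the two centred features are opposite vectors, so
`(z_t - μ_t)(z_t - μ_t)ᵀ` does not depend on which action is drawn: almost surely it equals the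
covariance matrix of the features under `π_t`, which is known before round `t`. Hence `Γ_t` is
predictable. Writing the reward as `⟨θ, z_t - μ_t⟩ + η_t` with `η_t = ⟨θ, μ_t⟩ + f_t + ξ_t`, the
noise satisfies `|η_t| ≤ 3` and `E[η_t (z_t - μ_t) | F_t] = 0`: the confounder is not centred, but
it multiplies a vector whose conditional mean vanishes. By Hoeffding's lemma
`exp (∑ ⟨w, Y_τ⟩ - ½ wᵀ (∑ Q_τ) w)`, with `Y_τ = η_τ (z_τ - μ_τ) / 3` and `Q_τ` the covariance
matrix of round `τ`, is a supermartingale for every `w`. Mixing over a Gaussian `w` with precision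
`λ I` and applying Markov's inequality bounds `‖∑ Y_τ‖_{Γ_t⁻¹}` by the log-determinant ratio of
`Γ_t` and `λ I`, which the trace bound `tr Γ_t ≤ d λ + t` controls. A union bound over the rounds
concludes.
-/

section QuadraticForm

variable {n : Type*} [Fintype n]

/-- The Mahalanobis norm `‖x‖_M = √(xᵀ M x)`, a seminorm when `M` is positive semidefinite. -/
noncomputable def mahalanobisNorm (M : Matrix n n ℝ) (x : n → ℝ) : ℝ :=
  √(x ⬝ᵥ M *ᵥ x)

lemma dotProduct_mulVec_self_nonneg {M : Matrix n n ℝ} (hM : M.PosSemidef) (x : n → ℝ) :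
    0 ≤ x ⬝ᵥ M *ᵥ x := by
  simpa using hM.dotProduct_mulVec_nonneg x

lemma dotProduct_vecMulVec_self_mulVec (u w : n → ℝ) :
    w ⬝ᵥ vecMulVec u u *ᵥ w = (w ⬝ᵥ u) ^ 2 := by
  rw [vecMulVec_mulVec, dotProduct_smul, dotProduct_comm u w]
  simp [sq]

omit [Fintype n] in
lemma posSemidef_vecMulVec_self [Finite n] (u : n → ℝ) : (vecMulVec u u).PosSemidef := by
  simpa using posSemidef_vecMulVec_self_star u

lemma abs_dotProduct_le_sqrt_mul_sqrt (x y : n → ℝ) : |x ⬝ᵥ y| ≤ √(x ⬝ᵥ x) * √(y ⬝ᵥ y) := by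
  rw [← Real.sqrt_mul (by simpa using dotProduct_star_self_nonneg x)]
  refine Real.abs_le_sqrt ?_
  simpa only [dotProduct, sq] using Finset.sum_mul_sq_le_sq_mul_sq univ x y

lemma norm_le_sqrt_dotProduct_self (x : n → ℝ) : ‖x‖ ≤ √(x ⬝ᵥ x) := by
  refine (pi_norm_le_iff_of_nonneg (Real.sqrt_nonneg _)).2 fun i ↦ Real.abs_le_sqrt ?_
  rw [sq]
  exact Finset.single_le_sum (f := fun i ↦ x i * x i) (fun i _ ↦ mul_self_nonneg (x i))
    (Finset.mem_univ i)

lemma mahalanobisNorm_smul (M : Matrix n n ℝ) (c : ℝ) (x : n → ℝ) :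
    mahalanobisNorm M (c • x) = |c| * mahalanobisNorm M x := by
  rw [mahalanobisNorm, mahalanobisNorm, mulVec_smul, smul_dotProduct, dotProduct_smul,
    smul_eq_mul, smul_eq_mul, ← mul_assoc, Real.sqrt_mul (mul_self_nonneg c),
    Real.sqrt_mul_self_eq_abs]

lemma mahalanobisNorm_sub_le {M : Matrix n n ℝ} (hM : M.PosSemidef) (x y : n → ℝ) :
    mahalanobisNorm M (x - y) ≤ mahalanobisNorm M x + mahalanobisNorm M y := by
  let seminormed := M.toSeminormedAddCommGroup hM
  let innerProduct := M.toInnerProductSpace hM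
  have norm_eq (w : n → ℝ) : seminormed.norm w = mahalanobisNorm M w :=
    (norm_eq_sqrt_real_inner w).trans (congrArg Real.sqrt (dotProduct_comm _ _))
  have triangle : seminormed.norm (x - y) ≤ seminormed.norm x + seminormed.norm y :=
    @norm_sub_le _ seminormed.toSeminormedAddGroup x y
  rwa [norm_eq, norm_eq, norm_eq] at triangle

variable [DecidableEq n]

lemma mulVec_inv_mulVec {M : Matrix n n ℝ} (hM : M.PosDef) (x : n → ℝ) :
    M *ᵥ (M⁻¹ *ᵥ x) = x := by
  rw [mulVec_mulVec, mul_nonsing_inv _ hM.det_pos.ne'.isUnit, one_mulVec]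

lemma mahalanobisNorm_inv_mulVec {M : Matrix n n ℝ} (hM : M.PosDef) (x : n → ℝ) :
    mahalanobisNorm M (M⁻¹ *ᵥ x) = mahalanobisNorm M⁻¹ x := by
  rw [mahalanobisNorm, mahalanobisNorm, mulVec_inv_mulVec hM, dotProduct_comm]

omit [Fintype n] in
lemma posDef_smul_one_add {ρ : ℝ} (hρ : 0 < ρ) {G : Matrix n n ℝ} (hG : G.PosSemidef) :
    (ρ • (1 : Matrix n n ℝ) + G).PosDef :=
  (PosDef.one.smul hρ).add_posSemidef hG

lemma mahalanobisNorm_inv_smul_one_add_smul_le {ρ : ℝ} (hρ : 0 < ρ) {G : Matrix n n ℝ}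
    (hG : G.PosSemidef) (x : n → ℝ) :
    mahalanobisNorm (ρ • (1 : Matrix n n ℝ) + G)⁻¹ (ρ • x) ≤ √ρ * √(x ⬝ᵥ x) := by
  set y := (ρ • (1 : Matrix n n ℝ) + G)⁻¹ *ᵥ x with hy
  have hx : x = ρ • y + G *ᵥ y := by
    rw [← mulVec_inv_mulVec (posDef_smul_one_add hρ hG) x, add_mulVec, smul_mulVec, one_mulVec]
  have gap_eq : x ⬝ᵥ x - ρ * (x ⬝ᵥ y) = ρ * (y ⬝ᵥ G *ᵥ y) + (G *ᵥ y) ⬝ᵥ (G *ᵥ y) := by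
    have : x ⬝ᵥ x - ρ * (x ⬝ᵥ y) = x ⬝ᵥ (G *ᵥ y) := by
      nth_rw 2 [hx]
      rw [dotProduct_add, dotProduct_smul, smul_eq_mul, add_sub_cancel_left]
    rw [this, hx, add_dotProduct, smul_dotProduct, smul_eq_mul]
  have gap_nonneg : 0 ≤ x ⬝ᵥ x - ρ * (x ⬝ᵥ y) := by
    rw [gap_eq]
    have := dotProduct_mulVec_self_nonneg hG y
    have : 0 ≤ (G *ᵥ y) ⬝ᵥ (G *ᵥ y) := by simpa using dotProduct_star_self_nonneg (G *ᵥ y)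
    positivity
  rw [← Real.sqrt_mul hρ.le, mahalanobisNorm, mulVec_smul, ← hy, smul_dotProduct, dotProduct_smul,
    smul_eq_mul, smul_eq_mul]
  gcongr
  linarith

lemma log_det_le_of_trace_le {M : Matrix n n ℝ} (hM : M.PosDef) {c : ℝ} (hc : 0 < c)
    (htr : M.trace ≤ Fintype.card n * c) :
    Real.log M.det ≤ Fintype.card n * Real.log c := by
  have hpos := hM.eigenvalues_pos
  rw [hM.isHermitian.trace_eq_sum_eigenvalues] at htr
  rw [hM.isHermitian.det_eq_prod_eigenvalues]
  set e := hM.isHermitian.eigenvalues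
  simp only [RCLike.ofReal_real_eq_id, id_eq] at htr ⊢
  have log_le (i : n) : Real.log (e i) ≤ e i / c - 1 + Real.log c := by
    have := Real.log_le_sub_one_of_pos (div_pos (hpos i) hc)
    rw [Real.log_div (hpos i).ne' hc.ne'] at this
    linarith
  calc Real.log (∏ i, e i) = ∑ i, Real.log (e i) := Real.log_prod fun i _ ↦ (hpos i).ne'
    _ ≤ ∑ i, (e i / c - 1 + Real.log c) := Finset.sum_le_sum fun i _ ↦ log_le i
    _ = (∑ i, e i) / c - Fintype.card n + Fintype.card n * Real.log c := by
        simp [Finset.sum_add_distrib, ← Finset.sum_div]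
    _ ≤ Fintype.card n * Real.log c := by
        have : (∑ i, e i) / c ≤ Fintype.card n := by rwa [div_le_iff₀ hc]
        linarith

lemma log_det_smul_one_add_le [Nonempty n] {ρ s : ℝ} (hρ : 0 < ρ) {G : Matrix n n ℝ}
    (hG : G.PosSemidef) (htr : G.trace ≤ s) :
    Real.log (ρ • (1 : Matrix n n ℝ) + G).det - Real.log (ρ • (1 : Matrix n n ℝ)).det
      ≤ Fintype.card n * Real.log (1 + s / (Fintype.card n * ρ)) := by
  have hs : 0 ≤ s := hG.trace_nonneg.trans htr
  have : (0 : ℝ) < Fintype.card n := mod_cast Fintype.card_pos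
  have h := log_det_le_of_trace_le (posDef_smul_one_add hρ hG)
    (c := ρ * (1 + s / (Fintype.card n * ρ))) (by positivity) (by
      rw [trace_add, trace_smul, trace_one, smul_eq_mul]
      field_simp
      linarith)
  rw [Real.log_mul hρ.ne' (by positivity), mul_add] at h
  rw [det_smul, det_one, mul_one, Real.log_pow]
  linarith

end QuadraticForm

section ExponentialSupermartingale

-- `sinh √q / √q` is the slope of the chord of `exp` over `[-√q, √q]`.
lemma exp_sub_half_le_one_add_mul_of_sq_le {y q : ℝ} (h : y ^ 2 ≤ q) :
    Real.exp (y - q / 2) ≤ 1 + Real.exp (-(q / 2)) * (Real.sinh √q / √q) * y := by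
  have hq : 0 ≤ q := (sq_nonneg y).trans h
  have hy : |y| ≤ √q := Real.abs_le_sqrt h
  have div_mul_eq : y / √q * √q = y :=
    div_mul_cancel_of_imp fun hs ↦ abs_eq_zero.1 (le_antisymm (hs ▸ hy) (abs_nonneg y))
  have ratio_le : |y / √q| ≤ 1 := by
    rw [abs_div, abs_of_nonneg (Real.sqrt_nonneg q)]
    exact div_le_one_of_le₀ hy (Real.sqrt_nonneg q)
  have cosh_le : Real.cosh √q ≤ Real.exp (q / 2) := by
    simpa only [Real.sq_sqrt hq] using Real.cosh_le_exp_half_sq √q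
  calc Real.exp (y - q / 2) = Real.exp (-(q / 2)) * Real.exp (y / √q * √q) := by
        rw [div_mul_eq, ← Real.exp_add, neg_add_eq_sub]
    _ ≤ Real.exp (-(q / 2)) * (Real.exp (q / 2) + y / √q * Real.sinh √q) := by
        gcongr
        exact (Real.exp_mul_le_cosh_add_mul_sinh ratio_le √q).trans (by gcongr)
    _ = 1 + Real.exp (-(q / 2)) * (Real.sinh √q / √q) * y := by
        rw [mul_add, ← Real.exp_add, neg_add_cancel, Real.exp_zero]
        ring

lemma abs_exp_neg_half_mul_sinh_div_mul_le_one {y q : ℝ} (h : y ^ 2 ≤ q) :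
    |Real.exp (-(q / 2)) * (Real.sinh √q / √q) * y| ≤ 1 := by
  have upper := exp_sub_half_le_one_add_mul_of_sq_le h
  have lower := exp_sub_half_le_one_add_mul_of_sq_le (y := -y) (q := q) (by rwa [neg_sq])
  rw [abs_le]
  constructor <;> linarith [Real.exp_pos (y - q / 2), Real.exp_pos (-y - q / 2)]

variable {Ω : Type*} {m m0 : MeasurableSpace Ω} {μ : Measure Ω}

lemma integrable_exp_sub_half [IsFiniteMeasure μ] {y q : Ω → ℝ} (hy : AEMeasurable y μ)
    (hq : AEMeasurable q μ) (hyq : ∀ᵐ ω ∂μ, y ω ^ 2 ≤ q ω) :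
    Integrable (fun ω ↦ Real.exp (y ω - q ω / 2)) μ := by
  refine .of_bound (by fun_prop) (Real.exp (1 / 2)) (hyq.mono fun ω h ↦ ?_)
  rw [Real.norm_of_nonneg (Real.exp_nonneg _), Real.exp_le_exp]
  nlinarith [sq_nonneg (y ω - 1)]

lemma condExp_exp_sub_half_le_one [IsFiniteMeasure μ] (hm : m ≤ m0) {y q : Ω → ℝ}
    (hy : Integrable y μ) (hq : Measurable[m] q) (hyq : ∀ᵐ ω ∂μ, y ω ^ 2 ≤ q ω)
    (hy0 : μ[y | m] =ᵐ[μ] 0) :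
    μ[fun ω ↦ Real.exp (y ω - q ω / 2) | m] ≤ᵐ[μ] 1 := by
  set slope : Ω → ℝ := fun ω ↦ Real.exp (-(q ω / 2)) * (Real.sinh √(q ω) / √(q ω))
  have slope_meas : Measurable[m] slope := by fun_prop
  have slope_mul_int : Integrable (slope * y) μ :=
    .of_bound ((slope_meas.mono hm le_rfl).aestronglyMeasurable.mul hy.1) 1
      (hyq.mono fun ω h ↦ abs_exp_neg_half_mul_sinh_div_mul_le_one h)
  have exp_int : Integrable (fun ω ↦ Real.exp (y ω - q ω / 2)) μ :=
    integrable_exp_sub_half hy.aemeasurable (hq.mono hm le_rfl).aemeasurable hyq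
  have one_int : Integrable (1 : Ω → ℝ) μ := integrable_const 1
  calc μ[fun ω ↦ Real.exp (y ω - q ω / 2) | m]
      ≤ᵐ[μ] μ[1 + slope * y | m] :=
        condExp_mono exp_int (one_int.add slope_mul_int)
          (hyq.mono fun ω h ↦ exp_sub_half_le_one_add_mul_of_sq_le h)
    _ =ᵐ[μ] μ[(1 : Ω → ℝ) | m] + μ[slope * y | m] := condExp_add one_int slope_mul_int m
    _ =ᵐ[μ] 1 := by
        filter_upwards [condExp_mul_of_stronglyMeasurable_left slope_meas.stronglyMeasurable
          slope_mul_int hy, hy0] with ω pull_out centered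
        have : μ[(1 : Ω → ℝ) | m] = 1 := condExp_const hm (1 : ℝ)
        simp [this, pull_out, centered]

/-- The exponential process `t ↦ exp (∑ τ < t, (y τ - q τ / 2))` of increments `y` with variance
proxies `q`. -/
noncomputable def expProcess (y q : ℕ → Ω → ℝ) (t : ℕ) (ω : Ω) : ℝ :=
  Real.exp (∑ τ ∈ range t, (y τ ω - q τ ω / 2))

lemma expProcess_succ (y q : ℕ → Ω → ℝ) (t : ℕ) :
    expProcess y q (t + 1) = expProcess y q t * fun ω ↦ Real.exp (y t ω - q t ω / 2) := by
  ext ω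
  simp only [expProcess, Finset.sum_range_succ, Real.exp_add, Pi.mul_apply]

variable {ℱ : Filtration ℕ m0} {y q : ℕ → Ω → ℝ}

lemma measurable_expProcess (hy : ∀ t, Measurable[ℱ (t + 1)] (y t))
    (hq : ∀ t, Measurable[ℱ t] (q t)) (t : ℕ) : Measurable[ℱ t] (expProcess y q t) := by
  refine Real.measurable_exp.comp (Finset.measurable_fun_sum _ fun τ hτ ↦ ?_)
  have hτt : τ < t := Finset.mem_range.1 hτ
  have hyτ : Measurable[ℱ t] (y τ) := (hy τ).mono (ℱ.mono hτt) le_rfl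
  have hqτ : Measurable[ℱ t] (q τ) := (hq τ).mono (ℱ.mono hτt.le) le_rfl
  fun_prop

lemma integrable_expProcess [IsFiniteMeasure μ] (hy : ∀ t, Measurable[ℱ (t + 1)] (y t))
    (hq : ∀ t, Measurable[ℱ t] (q t)) (hyq : ∀ t, ∀ᵐ ω ∂μ, y t ω ^ 2 ≤ q t ω) (t : ℕ) :
    Integrable (expProcess y q t) μ := by
  refine .of_bound ((measurable_expProcess hy hq t).mono (ℱ.le t) le_rfl).aestronglyMeasurable
    (Real.exp (∑ _τ ∈ range t, 1 / 2)) ?_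
  filter_upwards [ae_all_iff.2 hyq] with ω h
  rw [expProcess, Real.norm_of_nonneg (Real.exp_nonneg _), Real.exp_le_exp]
  exact Finset.sum_le_sum fun τ _ ↦ by nlinarith [h τ, sq_nonneg (y τ ω - 1)]

lemma supermartingale_expProcess [IsFiniteMeasure μ] (hy : ∀ t, Measurable[ℱ (t + 1)] (y t))
    (hyint : ∀ t, Integrable (y t) μ) (hq : ∀ t, Measurable[ℱ t] (q t))
    (hyq : ∀ t, ∀ᵐ ω ∂μ, y t ω ^ 2 ≤ q t ω) (hy0 : ∀ t, μ[y t | ℱ t] =ᵐ[μ] 0) :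
    Supermartingale (expProcess y q) ℱ μ := by
  refine supermartingale_nat (fun t ↦ (measurable_expProcess hy hq t).stronglyMeasurable)
    (integrable_expProcess hy hq hyq) fun t ↦ ?_
  have hint := integrable_expProcess hy hq hyq (t + 1)
  rw [expProcess_succ] at hint ⊢
  filter_upwards [condExp_mul_of_stronglyMeasurable_left
      (measurable_expProcess hy hq t).stronglyMeasurable hint
      (integrable_exp_sub_half (hyint t).aemeasurable
        ((hq t).mono (ℱ.le t) le_rfl).aemeasurable (hyq t)),
    condExp_exp_sub_half_le_one (ℱ.le t) (hyint t) (hq t) (hyq t) (hy0 t)] with ω pull_out factor_le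
  rw [pull_out]
  exact mul_le_of_le_one_right (Real.exp_nonneg _) factor_le

lemma lintegral_expProcess_le_one [IsProbabilityMeasure μ]
    (hy : ∀ t, Measurable[ℱ (t + 1)] (y t)) (hyint : ∀ t, Integrable (y t) μ)
    (hq : ∀ t, Measurable[ℱ t] (q t)) (hyq : ∀ t, ∀ᵐ ω ∂μ, y t ω ^ 2 ≤ q t ω)
    (hy0 : ∀ t, μ[y t | ℱ t] =ᵐ[μ] 0) (t : ℕ) :
    ∫⁻ ω, ENNReal.ofReal (expProcess y q t ω) ∂μ ≤ 1 := by
  rw [← ofReal_integral_eq_lintegral_ofReal (integrable_expProcess hy hq hyq t)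
    (ae_of_all _ fun ω ↦ Real.exp_nonneg _), ENNReal.ofReal_le_one]
  simpa [expProcess] using (supermartingale_expProcess hy hyint hq hyq hy0).setIntegral_le
    zero_le MeasurableSet.univ

end ExponentialSupermartingale

section GaussianMixture

variable {n : Type*} [Fintype n]

lemma lintegral_exp_neg_half_dotProduct_self :
    ∫⁻ w : n → ℝ, ENNReal.ofReal (Real.exp (-(w ⬝ᵥ w) / 2))
      = ENNReal.ofReal (√(2 * Real.pi) ^ Fintype.card n) := by
  have exp_eq_prod (w : n → ℝ) :
      Real.exp (-(w ⬝ᵥ w) / 2) = ∏ i, Real.exp (-(1 / 2) * w i ^ 2) := by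
    rw [← Real.exp_sum, ← Finset.mul_sum, dotProduct]
    simp_rw [sq]
    ring_nf
  have prod_int : Integrable fun w : n → ℝ ↦ ∏ i, Real.exp (-(1 / 2) * w i ^ 2) :=
    .fintype_prod fun _ ↦ integrable_exp_neg_mul_sq one_half_pos
  simp_rw [exp_eq_prod]
  rw [← ofReal_integral_eq_lintegral_ofReal prod_int
    (ae_of_all _ fun w ↦ Finset.prod_nonneg fun i _ ↦ Real.exp_nonneg _),
    integral_fintype_prod_volume_eq_pow fun x : ℝ ↦ Real.exp (-(1 / 2) * x ^ 2), integral_gaussian,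
    div_div_eq_mul_div, div_one, mul_comm Real.pi]

open scoped MatrixOrder Matrix.Norms.L2Operator in
lemma exists_eq_transpose_mul_self {M : Matrix n n ℝ} (hM : M.PosSemidef) :
    ∃ B : Matrix n n ℝ, M = Bᵀ * B := by
  classical
  obtain ⟨B, hB⟩ := CStarAlgebra.nonneg_iff_eq_star_mul_self.mp hM.nonneg
  exact ⟨B, by rw [hB, star_eq_conjTranspose, conjTranspose_eq_transpose_of_trivial]⟩

variable [DecidableEq n]

lemma lintegral_exp_neg_half_quadratic {M : Matrix n n ℝ} (hM : M.PosDef) :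
    ∫⁻ w : n → ℝ, ENNReal.ofReal (Real.exp (-(w ⬝ᵥ M *ᵥ w) / 2))
      = ENNReal.ofReal (√(2 * Real.pi) ^ Fintype.card n / √M.det) := by
  obtain ⟨B, rfl⟩ := exists_eq_transpose_mul_self hM.posSemidef
  have det_eq : (Bᵀ * B).det = B.det ^ 2 := by rw [det_mul, det_transpose, sq]
  have det_ne_zero : B.det ≠ 0 := fun h ↦ by simpa [det_eq, h] using hM.det_pos
  have quad_eq (w : n → ℝ) : w ⬝ᵥ (Bᵀ * B) *ᵥ w = toLin' B w ⬝ᵥ toLin' B w := by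
    rw [toLin'_apply, ← mulVec_mulVec, dotProduct_mulVec, vecMul_transpose]
  have toLin_meas : Measurable (toLin' B) := (toLin' B).continuous_of_finiteDimensional.measurable
  simp_rw [quad_eq]
  rw [← lintegral_map (f := fun x : n → ℝ ↦ ENNReal.ofReal (Real.exp (-(x ⬝ᵥ x) / 2)))
    (by unfold dotProduct; fun_prop) toLin_meas, Real.map_matrix_volume_pi_eq_smul_volume_pi
    det_ne_zero, lintegral_smul_measure, lintegral_exp_neg_half_dotProduct_self, smul_eq_mul,
    ← ENNReal.ofReal_mul (abs_nonneg _), det_eq,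
    Real.sqrt_sq_eq_abs, abs_inv, div_eq_inv_mul]

lemma add_inv_mulVec_dotProduct_sub_half_quadratic {M : Matrix n n ℝ} (hM : M.PosDef)
    (v w : n → ℝ) :
    (w + M⁻¹ *ᵥ v) ⬝ᵥ v - (w + M⁻¹ *ᵥ v) ⬝ᵥ M *ᵥ (w + M⁻¹ *ᵥ v) / 2
      = v ⬝ᵥ M⁻¹ *ᵥ v / 2 + -(w ⬝ᵥ M *ᵥ w) / 2 := by
  have symm : M⁻¹ *ᵥ v ⬝ᵥ M *ᵥ w = w ⬝ᵥ v := by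
    rw [dotProduct_mulVec, ← mulVec_transpose, ← conjTranspose_eq_transpose_of_trivial,
      hM.isHermitian.eq, mulVec_inv_mulVec hM, dotProduct_comm]
  rw [mulVec_add, mulVec_inv_mulVec hM]
  simp only [add_dotProduct, dotProduct_add, symm, dotProduct_comm (M⁻¹ *ᵥ v) v]
  ring

lemma lintegral_exp_dotProduct_sub_half_quadratic {M : Matrix n n ℝ} (hM : M.PosDef)
    (v : n → ℝ) :
    ∫⁻ w : n → ℝ, ENNReal.ofReal (Real.exp (w ⬝ᵥ v - w ⬝ᵥ M *ᵥ w / 2))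
      = ENNReal.ofReal (Real.exp (v ⬝ᵥ M⁻¹ *ᵥ v / 2)) *
        ENNReal.ofReal (√(2 * Real.pi) ^ Fintype.card n / √M.det) := by
  rw [← lintegral_exp_neg_half_quadratic hM, ← lintegral_const_mul' _ _ ENNReal.ofReal_ne_top,
    ← lintegral_add_right_eq_self _ (M⁻¹ *ᵥ v)]
  simp_rw [add_inv_mulVec_dotProduct_sub_half_quadratic hM, Real.exp_add,
    ENNReal.ofReal_mul (Real.exp_nonneg _)]

variable {Ω : Type*} {m0 : MeasurableSpace Ω} {μ : Measure Ω}

omit [DecidableEq n] in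
lemma measurable_ofReal_exp_dotProduct_sub_half_quadratic {S : Ω → n → ℝ} (hS : Measurable S)
    {V : Ω → Matrix n n ℝ} (hV : ∀ i j, Measurable fun ω ↦ V ω i j) :
    Measurable fun x : Ω × (n → ℝ) ↦
      ENNReal.ofReal (Real.exp (x.2 ⬝ᵥ S x.1 - x.2 ⬝ᵥ V x.1 *ᵥ x.2 / 2)) := by
  have (i j : n) : Measurable fun x : Ω × (n → ℝ) ↦ V x.1 i j :=
    (hV i j).comp measurable_fst
  simp only [dotProduct, mulVec]
  fun_prop

-- Integrate the bound `h` over a Gaussian `w` with precision matrix `A` and swap the integrals.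
lemma lintegral_lintegral_exp_dotProduct_sub_half_quadratic_le [SFinite μ]
    {A : Matrix n n ℝ} (hA : A.PosDef)
    {S : Ω → n → ℝ} (hS : Measurable S) {V : Ω → Matrix n n ℝ}
    (hVmeas : ∀ i j, Measurable fun ω ↦ V ω i j)
    (h : ∀ w, ∫⁻ ω, ENNReal.ofReal (Real.exp (w ⬝ᵥ S ω - w ⬝ᵥ V ω *ᵥ w / 2)) ∂μ ≤ 1) :
    ∫⁻ ω, (∫⁻ w : n → ℝ,
        ENNReal.ofReal (Real.exp (w ⬝ᵥ S ω - w ⬝ᵥ (A + V ω) *ᵥ w / 2))) ∂μ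
      ≤ ENNReal.ofReal (√(2 * Real.pi) ^ Fintype.card n / √A.det) := by
  have integrand_eq (ω : Ω) (w : n → ℝ) :
      ENNReal.ofReal (Real.exp (w ⬝ᵥ S ω - w ⬝ᵥ (A + V ω) *ᵥ w / 2))
        = ENNReal.ofReal (Real.exp (-(w ⬝ᵥ A *ᵥ w) / 2)) *
          ENNReal.ofReal (Real.exp (w ⬝ᵥ S ω - w ⬝ᵥ V ω *ᵥ w / 2)) := by
    rw [← ENNReal.ofReal_mul (Real.exp_nonneg _), ← Real.exp_add, add_mulVec, dotProduct_add]
    ring_nf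
  rw [lintegral_lintegral_swap (measurable_ofReal_exp_dotProduct_sub_half_quadratic hS
    fun i j ↦ (hVmeas i j).const_add (A i j)).aemeasurable, ← lintegral_exp_neg_half_quadratic hA]
  simp_rw [integrand_eq, lintegral_const_mul' _ _ ENNReal.ofReal_ne_top]
  exact lintegral_mono fun w ↦ mul_le_of_le_one_right' (h w)

lemma div_sqrt_div_le_exp_half_mul_div_sqrt {K a v p x : ℝ} (hK : 0 < K) (ha : 0 < a) (hv : 0 < v)
    (hp : 0 < p) (h : Real.log v - Real.log a + 2 * Real.log (1 / p) ≤ x) :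
    K / √a / p ≤ Real.exp (x / 2) * (K / √v) := by
  rw [one_div, Real.log_inv] at h
  rw [← Real.log_le_log_iff (by positivity) (by positivity),
    Real.log_mul (by positivity) (by positivity), Real.log_exp,
    Real.log_div (by positivity) (by positivity), Real.log_div (by positivity) (by positivity),
    Real.log_div (by positivity) (by positivity), Real.log_sqrt ha.le, Real.log_sqrt hv.le]
  linarith

lemma measure_mahalanobisNorm_inv_gt_le [SFinite μ] {A : Matrix n n ℝ} (hA : A.PosDef)
    {S : Ω → n → ℝ} (hS : Measurable S) {V : Ω → Matrix n n ℝ}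
    (hVmeas : ∀ i j, Measurable fun ω ↦ V ω i j) (hV : ∀ ω, (V ω).PosSemidef)
    (h : ∀ w, ∫⁻ ω, ENNReal.ofReal (Real.exp (w ⬝ᵥ S ω - w ⬝ᵥ V ω *ᵥ w / 2)) ∂μ ≤ 1)
    {p : ℝ} (hp : 0 < p) :
    μ {ω | √(Real.log (A + V ω).det - Real.log A.det + 2 * Real.log (1 / p))
        < mahalanobisNorm (A + V ω)⁻¹ (S ω)} ≤ ENNReal.ofReal p := by
  set K := √(2 * Real.pi) ^ Fintype.card n
  have hK : 0 < K := by positivity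
  have detA_pos := hA.det_pos
  have threshold_le {ω : Ω} (hω : √(Real.log (A + V ω).det - Real.log A.det + 2 * Real.log (1 / p))
      < mahalanobisNorm (A + V ω)⁻¹ (S ω)) :
      ENNReal.ofReal (K / √A.det / p) ≤ ∫⁻ w : n → ℝ,
        ENNReal.ofReal (Real.exp (w ⬝ᵥ S ω - w ⬝ᵥ (A + V ω) *ᵥ w / 2)) := by
    have hAV := hA.add_posSemidef (hV ω)
    rw [lintegral_exp_dotProduct_sub_half_quadratic hAV, ← ENNReal.ofReal_mul (Real.exp_nonneg _)]
    refine ENNReal.ofReal_le_ofReal <| div_sqrt_div_le_exp_half_mul_div_sqrt hK detA_pos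
      hAV.det_pos hp <| le_of_lt <| lt_of_not_ge fun h ↦ hω.not_ge (Real.sqrt_le_sqrt h)
  calc μ {ω | _}
      ≤ μ {ω | ENNReal.ofReal (K / √A.det / p) ≤ ∫⁻ w : n → ℝ,
          ENNReal.ofReal (Real.exp (w ⬝ᵥ S ω - w ⬝ᵥ (A + V ω) *ᵥ w / 2))} :=
        measure_mono fun _ ↦ threshold_le
    _ ≤ (∫⁻ ω, (∫⁻ w : n → ℝ,
          ENNReal.ofReal (Real.exp (w ⬝ᵥ S ω - w ⬝ᵥ (A + V ω) *ᵥ w / 2))) ∂μ) /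
          ENNReal.ofReal (K / √A.det / p) :=
        meas_ge_le_lintegral_div (measurable_ofReal_exp_dotProduct_sub_half_quadratic hS
            fun i j ↦ (hVmeas i j).const_add (A i j)).lintegral_prod_right'.aemeasurable
          (ENNReal.ofReal_pos.2 (by positivity)).ne' ENNReal.ofReal_ne_top
    _ ≤ ENNReal.ofReal (K / √A.det) / ENNReal.ofReal (K / √A.det / p) := by
        gcongr
        exact lintegral_lintegral_exp_dotProduct_sub_half_quadratic_le hA hS hVmeas h
    _ = ENNReal.ofReal p := by
        rw [← ENNReal.ofReal_div_of_pos (by positivity)]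
        congr 1
        field_simp

end GaussianMixture

section RidgeRegression

variable {n : Type*} [Fintype n] [DecidableEq n]

lemma mahalanobisNorm_ridge_sub_le {ι : Type*} (s : Finset ι) {ρ : ℝ} (hρ : 0 < ρ)
    (v : ι → n → ℝ) (η : ι → ℝ) (θ : n → ℝ) {Γ : Matrix n n ℝ}
    (hΓ : Γ = ρ • (1 : Matrix n n ℝ) + ∑ i ∈ s, vecMulVec (v i) (v i)) :
    mahalanobisNorm Γ (Γ⁻¹ *ᵥ (∑ i ∈ s, (θ ⬝ᵥ v i + η i) • v i) - θ)
      ≤ mahalanobisNorm Γ⁻¹ (∑ i ∈ s, η i • v i) + √ρ * √(θ ⬝ᵥ θ) := by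
  have gram_psd : (∑ i ∈ s, vecMulVec (v i) (v i)).PosSemidef :=
    posSemidef_sum s fun i _ ↦ posSemidef_vecMulVec_self (v i)
  have hΓpos : Γ.PosDef := hΓ ▸ posDef_smul_one_add hρ gram_psd
  have normal_eq : ∑ i ∈ s, (θ ⬝ᵥ v i + η i) • v i = Γ *ᵥ θ + (∑ i ∈ s, η i • v i - ρ • θ) := by
    simp only [hΓ, add_smul, Finset.sum_add_distrib, add_mulVec, smul_mulVec, one_mulVec,
      sum_mulVec, vecMulVec_mulVec, dotProduct_comm θ, op_smul_eq_smul]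
    abel
  have error_eq : Γ⁻¹ *ᵥ (∑ i ∈ s, (θ ⬝ᵥ v i + η i) • v i) - θ
      = Γ⁻¹ *ᵥ (∑ i ∈ s, η i • v i) - Γ⁻¹ *ᵥ (ρ • θ) := by
    rw [normal_eq, mulVec_add, mulVec_mulVec, nonsing_inv_mul _ hΓpos.det_pos.ne'.isUnit,
      one_mulVec, mulVec_sub, add_sub_cancel_left]
  calc _ ≤ mahalanobisNorm Γ (Γ⁻¹ *ᵥ (∑ i ∈ s, η i • v i)) + mahalanobisNorm Γ (Γ⁻¹ *ᵥ (ρ • θ)) :=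
        error_eq ▸ mahalanobisNorm_sub_le hΓpos.posSemidef _ _
    _ ≤ _ := by
        rw [mahalanobisNorm_inv_mulVec hΓpos, mahalanobisNorm_inv_mulVec hΓpos, hΓ]
        gcongr
        exact mahalanobisNorm_inv_smul_one_add_smul_le hρ gram_psd θ

variable {Ω : Type*} {m0 : MeasurableSpace Ω} {μ : Measure Ω} [IsProbabilityMeasure μ]
  {ℱ : Filtration ℕ m0}

omit [DecidableEq n] in
lemma lintegral_exp_dotProduct_sum_sub_half_quadratic_le_one {Y : ℕ → Ω → n → ℝ}
    {Q : ℕ → Ω → Matrix n n ℝ} (hY : ∀ t, Measurable[ℱ (t + 1)] (Y t))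
    (hYint : ∀ t, Integrable (Y t) μ) (hQ : ∀ t i j, Measurable[ℱ t] fun ω ↦ Q t ω i j)
    (hYQ : ∀ t, ∀ᵐ ω ∂μ, ∀ w, (w ⬝ᵥ Y t ω) ^ 2 ≤ w ⬝ᵥ Q t ω *ᵥ w)
    (hY0 : ∀ t w, μ[fun ω ↦ w ⬝ᵥ Y t ω | ℱ t] =ᵐ[μ] 0) (t : ℕ) (w : n → ℝ) :
    ∫⁻ ω, ENNReal.ofReal (Real.exp (w ⬝ᵥ (∑ τ ∈ range t, Y τ ω)
      - w ⬝ᵥ (∑ τ ∈ range t, Q τ ω) *ᵥ w / 2)) ∂μ ≤ 1 := by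
  have exp_eq (ω : Ω) : Real.exp (w ⬝ᵥ (∑ τ ∈ range t, Y τ ω)
      - w ⬝ᵥ (∑ τ ∈ range t, Q τ ω) *ᵥ w / 2)
      = expProcess (fun τ ω ↦ w ⬝ᵥ Y τ ω) (fun τ ω ↦ w ⬝ᵥ Q τ ω *ᵥ w) t ω := by
    rw [expProcess, dotProduct_sum, sum_mulVec, dotProduct_sum, Finset.sum_sub_distrib,
      Finset.sum_div]
  simp_rw [exp_eq]
  refine lintegral_expProcess_le_one (ℱ := ℱ) (fun τ ↦ ?_) (fun τ ↦ ?_) (fun τ ↦ ?_)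
    (fun τ ↦ (hYQ τ).mono fun ω h ↦ h w) (fun τ ↦ hY0 τ w) t
  · have := hY τ
    unfold dotProduct
    fun_prop
  · unfold dotProduct
    exact integrable_finsetSum _ fun i _ ↦ ((hYint τ).eval i).const_mul _
  · have := hQ τ
    simp only [dotProduct, mulVec]
    fun_prop

lemma measure_mahalanobisNorm_inv_sum_gt_le [Nonempty n] {Y : ℕ → Ω → n → ℝ}
    {Q : ℕ → Ω → Matrix n n ℝ} (hY : ∀ t, Measurable[ℱ (t + 1)] (Y t))
    (hYint : ∀ t, Integrable (Y t) μ) (hQ : ∀ t i j, Measurable[ℱ t] fun ω ↦ Q t ω i j)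
    (hQpsd : ∀ t ω, (Q t ω).PosSemidef) {b : ℝ} (hQtr : ∀ t ω, (Q t ω).trace ≤ b)
    (hYQ : ∀ t, ∀ᵐ ω ∂μ, ∀ w, (w ⬝ᵥ Y t ω) ^ 2 ≤ w ⬝ᵥ Q t ω *ᵥ w)
    (hY0 : ∀ t w, μ[fun ω ↦ w ⬝ᵥ Y t ω | ℱ t] =ᵐ[μ] 0) {ρ p : ℝ} (hρ : 0 < ρ) (hp : 0 < p)
    (t : ℕ) :
    μ {ω | √(Fintype.card n * Real.log (1 + t * b / (Fintype.card n * ρ)) + 2 * Real.log (1 / p))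
      < mahalanobisNorm (ρ • (1 : Matrix n n ℝ) + ∑ τ ∈ range t, Q τ ω)⁻¹ (∑ τ ∈ range t, Y τ ω)}
      ≤ ENNReal.ofReal p := by
  have sum_psd (ω : Ω) : (∑ τ ∈ range t, Q τ ω).PosSemidef :=
    posSemidef_sum _ fun τ _ ↦ hQpsd τ ω
  have sum_trace_le (ω : Ω) : (∑ τ ∈ range t, Q τ ω).trace ≤ t * b := by
    rw [trace_sum]
    exact (Finset.sum_le_sum fun τ _ ↦ hQtr τ ω).trans (by simp)
  have sumY_meas : Measurable fun ω ↦ ∑ τ ∈ range t, Y τ ω :=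
    Finset.measurable_fun_sum _ fun τ _ ↦ (hY τ).mono (ℱ.le _) le_rfl
  have sumQ_meas (i j : n) : Measurable fun ω ↦ (∑ τ ∈ range t, Q τ ω) i j := by
    simp_rw [Matrix.sum_apply]
    exact Finset.measurable_fun_sum _ fun τ _ ↦ (hQ τ i j).mono (ℱ.le _) le_rfl
  refine le_trans (measure_mono fun ω hω ↦ lt_of_le_of_lt (Real.sqrt_le_sqrt ?_) hω)
    (measure_mahalanobisNorm_inv_gt_le (PosDef.one.smul hρ) sumY_meas sumQ_meas sum_psd
      (lintegral_exp_dotProduct_sum_sub_half_quadratic_le_one hY hYint hQ hYQ hY0 t) hp)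
  gcongr
  exact log_det_smul_one_add_le hρ (sum_psd ω) (sum_trace_le ω)

lemma measure_mahalanobisNorm_inv_sum_smul_gt_le [Nonempty n] {v : ℕ → Ω → n → ℝ}
    {η : ℕ → Ω → ℝ} {Q : ℕ → Ω → Matrix n n ℝ} (hv : ∀ t, Measurable[ℱ (t + 1)] (v t))
    (hη : ∀ t, Measurable[ℱ (t + 1)] (η t)) {c : ℝ} (hc : 0 < c) (hηc : ∀ t ω, |η t ω| ≤ c)
    (hQ : ∀ t i j, Measurable[ℱ t] fun ω ↦ Q t ω i j) (hQpsd : ∀ t ω, (Q t ω).PosSemidef)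
    {b : ℝ} (hQtr : ∀ t ω, (Q t ω).trace ≤ b)
    (hvQ : ∀ t, ∀ᵐ ω ∂μ, vecMulVec (v t ω) (v t ω) = Q t ω)
    (hη0 : ∀ t w, μ[fun ω ↦ η t ω * (w ⬝ᵥ v t ω) | ℱ t] =ᵐ[μ] 0)
    {ρ p : ℝ} (hρ : 0 < ρ) (hp : 0 < p) (t : ℕ) :
    μ {ω | c *
        √(Fintype.card n * Real.log (1 + t * b / (Fintype.card n * ρ)) + 2 * Real.log (1 / p))
      < mahalanobisNorm (ρ • (1 : Matrix n n ℝ) + ∑ τ ∈ range t, Q τ ω)⁻¹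
          (∑ τ ∈ range t, η τ ω • v τ ω)}
      ≤ ENNReal.ofReal p := by
  set Y : ℕ → Ω → n → ℝ := fun τ ω ↦ (c⁻¹ * η τ ω) • v τ ω with hY
  have scaled_le (τ ω) : |c⁻¹ * η τ ω| ≤ 1 := by
    rw [abs_mul, abs_inv, abs_of_pos hc]
    exact inv_mul_le_one_of_le₀ (hηc τ ω) hc.le
  have Y_meas (τ) : Measurable[ℱ (τ + 1)] (Y τ) := ((hη τ).const_mul c⁻¹).smul (hv τ)
  have Y_int (τ) : Integrable (Y τ) μ := by
    refine .of_bound ((Y_meas τ).mono (ℱ.le _) le_rfl).aestronglyMeasurable √b ?_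
    filter_upwards [hvQ τ] with ω h
    rw [norm_smul, Real.norm_eq_abs]
    refine (mul_le_of_le_one_left (norm_nonneg _) (scaled_le τ ω)).trans
      ((norm_le_sqrt_dotProduct_self _).trans (Real.sqrt_le_sqrt ?_))
    rw [← trace_vecMulVec, h]
    exact hQtr τ ω
  have Y_sq_le (τ) : ∀ᵐ ω ∂μ, ∀ w, (w ⬝ᵥ Y τ ω) ^ 2 ≤ w ⬝ᵥ Q τ ω *ᵥ w := by
    filter_upwards [hvQ τ] with ω h w
    rw [← h, dotProduct_vecMulVec_self_mulVec, dotProduct_smul, smul_eq_mul, mul_pow]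
    exact mul_le_of_le_one_left (sq_nonneg _) ((sq_le_one_iff_abs_le_one _).2 (scaled_le τ ω))
  have Y_centered (τ) (w : n → ℝ) : μ[fun ω ↦ w ⬝ᵥ Y τ ω | ℱ τ] =ᵐ[μ] 0 := by
    have : (fun ω ↦ w ⬝ᵥ Y τ ω) = c⁻¹ • fun ω ↦ η τ ω * (w ⬝ᵥ v τ ω) := by
      ext ω
      simp only [hY, dotProduct_smul, Pi.smul_apply, smul_eq_mul, mul_assoc]
    rw [this]
    filter_upwards [condExp_smul (μ := μ) c⁻¹ (fun ω ↦ η τ ω * (w ⬝ᵥ v τ ω)) (ℱ τ), hη0 τ w]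
      with ω smul_eq centered
    simp [smul_eq, centered]
  have noise_eq (ω) : ∑ τ ∈ range t, η τ ω • v τ ω = c • ∑ τ ∈ range t, Y τ ω := by
    simp only [hY, Finset.smul_sum, smul_smul, mul_inv_cancel_left₀ hc.ne']
  simpa only [noise_eq, mahalanobisNorm_smul, abs_of_pos hc, mul_lt_mul_iff_right₀ hc] using
    measure_mahalanobisNorm_inv_sum_gt_le Y_meas Y_int hQ hQpsd hQtr Y_sq_le Y_centered hρ hp t

lemma measure_ridge_error_gt_le [Nonempty n] {v : ℕ → Ω → n → ℝ} {η : ℕ → Ω → ℝ}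
    {Q : ℕ → Ω → Matrix n n ℝ} (hv : ∀ t, Measurable[ℱ (t + 1)] (v t))
    (hη : ∀ t, Measurable[ℱ (t + 1)] (η t)) {c : ℝ} (hc : 0 < c) (hηc : ∀ t ω, |η t ω| ≤ c)
    (hQ : ∀ t i j, Measurable[ℱ t] fun ω ↦ Q t ω i j) (hQpsd : ∀ t ω, (Q t ω).PosSemidef)
    {b : ℝ} (hQtr : ∀ t ω, (Q t ω).trace ≤ b)
    (hvQ : ∀ t, ∀ᵐ ω ∂μ, vecMulVec (v t ω) (v t ω) = Q t ω)
    (hη0 : ∀ t w, μ[fun ω ↦ η t ω * (w ⬝ᵥ v t ω) | ℱ t] =ᵐ[μ] 0)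
    {ρ p : ℝ} (hρ : 0 < ρ) (hp : 0 < p) (θ : n → ℝ) {t : ℕ} {Γ : Ω → Matrix n n ℝ}
    (hΓ : ∀ ω, Γ ω = ρ • (1 : Matrix n n ℝ) + ∑ τ ∈ range t, vecMulVec (v τ ω) (v τ ω)) :
    μ {ω | √ρ * √(θ ⬝ᵥ θ) +
        c * √(Fintype.card n * Real.log (1 + t * b / (Fintype.card n * ρ)) + 2 * Real.log (1 / p))
      < mahalanobisNorm (Γ ω)
          ((Γ ω)⁻¹ *ᵥ (∑ τ ∈ range t, (θ ⬝ᵥ v τ ω + η τ ω) • v τ ω) - θ)}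
      ≤ ENNReal.ofReal p := by
  refine le_trans (measure_mono_ae ?_) (measure_mahalanobisNorm_inv_sum_smul_gt_le hv hη hc hηc
    hQ hQpsd hQtr hvQ hη0 hρ hp t)
  filter_upwards [ae_all_iff.2 hvQ] with ω h (hω : _ < _)
  have error_le := hω.trans_le (mahalanobisNorm_ridge_sub_le (range t) hρ (v · ω) (η · ω) θ (hΓ ω))
  rw [hΓ ω, add_comm, add_lt_add_iff_right] at error_le
  simp only [h] at error_le
  exact error_le

end RidgeRegression

section WeightedMoments

variable {n A : Type*} [Fintype A] {p : A → ℝ} {x : A → n → ℝ}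

/-- The mean of the points `x b` under the weights `p`: the mean feature `μ_t` when `p = π_t`. -/
def weightedMean (p : A → ℝ) (x : A → n → ℝ) : n → ℝ :=
  ∑ b, p b • x b

/-- The covariance matrix of the points `x b` under the weights `p`: the predictable
increment `Q_t` of `Γ_t` when `p = π_t`. -/
def weightedCov (p : A → ℝ) (x : A → n → ℝ) : Matrix n n ℝ :=
  ∑ b, p b • vecMulVec (x b - weightedMean p x) (x b - weightedMean p x)

section Fintype

variable [Fintype n]

lemma dotProduct_weightedMean (w : n → ℝ) : w ⬝ᵥ weightedMean p x = ∑ b, p b * (w ⬝ᵥ x b) := by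
  simp only [weightedMean, dotProduct_sum, dotProduct_smul, smul_eq_mul]

lemma abs_dotProduct_weightedMean_le (hp : p ∈ stdSimplex ℝ A) {w : n → ℝ} {B : ℝ}
    (h : ∀ b, |w ⬝ᵥ x b| ≤ B) : |w ⬝ᵥ weightedMean p x| ≤ B := by
  rw [dotProduct_weightedMean]
  calc |∑ b, p b * (w ⬝ᵥ x b)| ≤ ∑ b, |p b * (w ⬝ᵥ x b)| := Finset.abs_sum_le_sum_abs _ _
    _ ≤ ∑ b, p b * B := Finset.sum_le_sum fun b _ ↦ by
        rw [abs_mul, abs_of_nonneg (hp.1 b)]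
        exact mul_le_mul_of_nonneg_left (h b) (hp.1 b)
    _ = B := by rw [← Finset.sum_mul, hp.2, one_mul]

lemma sum_mul_dotProduct_sub_weightedMean (hp : ∑ b, p b = 1) (w : n → ℝ) :
    ∑ b, p b * (w ⬝ᵥ (x b - weightedMean p x)) = 0 := by
  simp only [dotProduct_sub, mul_sub, Finset.sum_sub_distrib, ← Finset.sum_mul, hp, one_mul,
    dotProduct_weightedMean, sub_self]

omit [Fintype n] in
lemma posSemidef_weightedCov [Finite n] (hp : 0 ≤ p) : (weightedCov p x).PosSemidef :=
  posSemidef_sum _ fun b _ ↦ (posSemidef_vecMulVec_self _).smul (hp b)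

lemma trace_weightedCov (hp : ∑ b, p b = 1) :
    (weightedCov p x).trace
      = ∑ b, p b * (x b ⬝ᵥ x b) - weightedMean p x ⬝ᵥ weightedMean p x := by
  have cross : ∑ b, p b * (x b ⬝ᵥ weightedMean p x) = weightedMean p x ⬝ᵥ weightedMean p x := by
    rw [dotProduct_weightedMean]
    simp only [dotProduct_comm]
  simp only [weightedCov, trace_sum, trace_smul, trace_vecMulVec, smul_eq_mul, dotProduct_sub,
    sub_dotProduct, mul_sub, Finset.sum_sub_distrib, ← Finset.sum_mul, hp, one_mul, cross,
    ← dotProduct_weightedMean, sub_self, sub_zero]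

lemma trace_weightedCov_le (hp : p ∈ stdSimplex ℝ A) {R : ℝ} (h : ∀ b, x b ⬝ᵥ x b ≤ R) :
    (weightedCov p x).trace ≤ R := by
  have mean_sq_nonneg : 0 ≤ weightedMean p x ⬝ᵥ weightedMean p x := by
    simpa using dotProduct_star_self_nonneg (weightedMean p x)
  rw [trace_weightedCov hp.2]
  calc _ ≤ ∑ b, p b * (x b ⬝ᵥ x b) := sub_le_self _ mean_sq_nonneg
    _ ≤ ∑ b, p b * R := Finset.sum_le_sum fun b _ ↦ mul_le_mul_of_nonneg_left (h b) (hp.1 b)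
    _ = R := by rw [← Finset.sum_mul, hp.2, one_mul]

end Fintype

section Measurable

variable [Countable n] {Ω : Type*} {mΩ : MeasurableSpace Ω} {p : Ω → A → ℝ} {x : A → Ω → n → ℝ}

lemma measurable_weightedMean (hp : ∀ b, Measurable fun ω ↦ p ω b)
    (hx : ∀ b, Measurable (x b)) : Measurable fun ω ↦ weightedMean (p ω) (x · ω) :=
  Finset.measurable_fun_sum _ fun b _ ↦ (hp b).smul (hx b)

lemma measurable_weightedCov_apply (hp : ∀ b, Measurable fun ω ↦ p ω b)
    (hx : ∀ b, Measurable (x b)) (i j : n) :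
    Measurable fun ω ↦ weightedCov (p ω) (x · ω) i j := by
  have dev_meas (b : A) : Measurable fun ω ↦ x b ω - weightedMean (p ω) (x · ω) :=
    (hx b).sub (measurable_weightedMean hp hx)
  simp only [weightedCov, Matrix.sum_apply, Matrix.smul_apply, vecMulVec_apply, smul_eq_mul]
  exact Finset.measurable_fun_sum _ fun b _ ↦ (hp b).mul
    ((measurable_pi_iff.1 (dev_meas b) i).mul (measurable_pi_iff.1 (dev_meas b) j))

end Measurable

variable [DecidableEq A]

lemma sum_single_half_add_single_half_smul {E : Type*} [AddCommGroup E] [Module ℝ E]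
    (b c : A) (F : A → E) :
    ∑ j, (Pi.single b (1 / 2) + Pi.single c (1 / 2) : A → ℝ) j • F j
      = (1 / 2 : ℝ) • (F b + F c) := by
  simp [add_smul, Finset.sum_add_distrib, Pi.single_apply]

/-- `p` is the law of a uniformly chosen element of a pair `{b, c}`: a point mass when `b = c`, so
that both kinds of sampling distribution of a two-action bandit are covered. -/
def IsUniformOnPair (p : A → ℝ) : Prop :=
  ∃ b c, p = Pi.single b (1 / 2) + Pi.single c (1 / 2)

lemma isUniformOnPair_of_card_eq_two (hA : Fintype.card A = 2)
    (hp : (∃ b, ∀ b', p b' = if b' = b then 1 else 0) ∨ ∀ b', p b' = 1 / 2) :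
    IsUniformOnPair p := by
  rcases hp with ⟨b, hb⟩ | huniform
  · refine ⟨b, b, funext fun b' ↦ ?_⟩
    rw [hb, Pi.add_apply, Pi.single_apply]
    split_ifs <;> norm_num
  · obtain ⟨b, c, hbc, huniv⟩ := Finset.card_eq_two.1 (Finset.card_univ.trans hA)
    refine ⟨b, c, funext fun b' ↦ ?_⟩
    obtain rfl | rfl : b' = b ∨ b' = c := by simpa [huniv] using Finset.mem_univ b'
    · simp [huniform, hbc]
    · simp [huniform, hbc.symm]

namespace IsUniformOnPair

lemma mem_stdSimplex (hp : IsUniformOnPair p) : p ∈ stdSimplex ℝ A := by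
  obtain ⟨b, c, rfl⟩ := hp
  refine ⟨fun i ↦ add_nonneg ?_ ?_, ?_⟩
  · exact (Pi.single_nonneg.2 one_half_pos.le : (0 : A → ℝ) ≤ Pi.single b (1 / 2)) i
  · exact (Pi.single_nonneg.2 one_half_pos.le : (0 : A → ℝ) ≤ Pi.single c (1 / 2)) i
  · simp only [Pi.add_apply, Finset.sum_add_distrib, Finset.sum_pi_single', Finset.mem_univ,
      if_true, add_halves]

-- The two points of a pair deviate from their midpoint by opposite vectors.
lemma vecMulVec_sub_weightedMean (hp : IsUniformOnPair p) {i : A} (hi : p i ≠ 0) :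
    vecMulVec (x i - weightedMean p x) (x i - weightedMean p x) = weightedCov p x := by
  obtain ⟨b, c, rfl⟩ := hp
  have mem_pair : i = b ∨ i = c := by
    by_contra! h
    simp [h.1, h.2] at hi
  set m := weightedMean (Pi.single b (1 / 2) + Pi.single c (1 / 2)) x with hm
  have dev_eq_neg : x c - m = -(x b - m) := by
    rw [hm, weightedMean, sum_single_half_add_single_half_smul, smul_add]
    ext k
    simp only [Pi.sub_apply, Pi.add_apply, Pi.smul_apply, Pi.neg_apply, smul_eq_mul]
    ring
  have cov_eq : weightedCov (Pi.single b (1 / 2) + Pi.single c (1 / 2)) x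
      = vecMulVec (x b - m) (x b - m) := by
    rw [weightedCov, sum_single_half_add_single_half_smul, ← hm, dev_eq_neg, neg_vecMulVec,
      vecMulVec_neg, neg_neg, ← two_smul ℝ, smul_smul, one_div, inv_mul_cancel₀ two_ne_zero,
      one_smul]
  rcases mem_pair with rfl | rfl
  · rw [cov_eq]
  · rw [cov_eq, dev_eq_neg, neg_vecMulVec, vecMulVec_neg, neg_neg]

end IsUniformOnPair

end WeightedMoments

section Sampling

lemma measurable_apply_self {Ω A β : Type*} {_ : MeasurableSpace Ω} [MeasurableSpace A]
    [Countable A] [MeasurableSingletonClass A] [MeasurableSpace β] {h : A → Ω → β}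
    (hh : ∀ b, Measurable (h b)) {a : Ω → A} (ha : Measurable a) : Measurable fun ω ↦ h (a ω) ω :=
  (measurable_from_prod_countable_right (f := h.uncurry) hh).comp (ha.prodMk measurable_id)

variable {Ω : Type*} {m m0 : MeasurableSpace Ω} {μ : Measure Ω} [IsFiniteMeasure μ]

lemma condExp_mul_of_condIndepFun [StandardBorelSpace Ω] (hm : m ≤ m0) {f g : Ω → ℝ}
    (hf : Measurable f) (hg : Measurable g) (hfi : Integrable f μ) (hgi : Integrable g μ)
    (hfgi : Integrable (f * g) μ) (h : CondIndepFun m hm f g μ) :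
    μ[f * g | m] =ᵐ[μ] μ[f | m] * μ[g | m] := by
  have map_eq_prod := ae_of_ae_trim hm ((condIndepFun_iff_map_prod_eq_prod_map_map hf hg).1 h)
  filter_upwards [map_eq_prod, condExp_ae_eq_integral_condExpKernel hm hfi,
    condExp_ae_eq_integral_condExpKernel hm hgi,
    condExp_ae_eq_integral_condExpKernel hm hfgi] with ω hω hfω hgω hfgω
  rw [Kernel.map_apply _ (hf.prodMk hg), Kernel.prod_apply, Kernel.map_apply _ hf,
    Kernel.map_apply _ hg] at hω
  rw [Pi.mul_apply, hfω, hgω, hfgω]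
  calc ∫ y, (f * g) y ∂condExpKernel μ m ω
      = ∫ p : ℝ × ℝ, p.1 * p.2 ∂(condExpKernel μ m ω).map fun y ↦ (f y, g y) :=
        (integral_map (f := fun p : ℝ × ℝ ↦ p.1 * p.2) (hf.prodMk hg).aemeasurable
          (by fun_prop)).symm
    _ = (∫ y, f y ∂condExpKernel μ m ω) * ∫ y, g y ∂condExpKernel μ m ω := by
        rw [hω, integral_prod_mul (fun x : ℝ ↦ x) (fun y : ℝ ↦ y),
          integral_map hf.aemeasurable (by fun_prop), integral_map hg.aemeasurable (by fun_prop)]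

lemma ae_imp_ne_zero_of_condExp_ite_eq (hm : m ≤ m0) {P : Ω → Prop} [DecidablePred P]
    (hP : MeasurableSet {ω | P ω}) {q : Ω → ℝ} (hq : Measurable[m] q)
    (hlaw : μ[(fun ω ↦ if P ω then (1 : ℝ) else 0) | m] =ᵐ[μ] q) :
    ∀ᵐ ω ∂μ, P ω → q ω ≠ 0 := by
  have ite_nonneg (ω : Ω) : 0 ≤ if P ω then (1 : ℝ) else 0 := by positivity
  have ite_int : Integrable (fun ω ↦ if P ω then (1 : ℝ) else 0) μ :=
    .of_bound (Measurable.ite hP measurable_const measurable_const).aestronglyMeasurable 1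
      (ae_of_all _ fun ω ↦ by split_ifs <;> simp)
  have zero_meas : MeasurableSet[m] {ω | q ω = 0} := hq (measurableSet_singleton 0)
  have integral_eq_zero : ∫ ω in {ω | q ω = 0}, (if P ω then (1 : ℝ) else 0) ∂μ = 0 := by
    rw [← setIntegral_condExp hm ite_int zero_meas,
      setIntegral_congr_ae (g := fun _ ↦ (0 : ℝ)) (hm _ zero_meas)
        (hlaw.mono fun ω hω hqω ↦ hω.trans hqω), integral_zero]
  rw [setIntegral_eq_zero_iff_of_nonneg_ae (ae_of_all _ ite_nonneg) ite_int.integrableOn,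
    Filter.EventuallyEq, ae_restrict_iff' (hm _ zero_meas)] at integral_eq_zero
  filter_upwards [integral_eq_zero] with ω hω hPω hqω
  simpa [hPω] using hω hqω

variable {A : Type*} [DecidableEq A] [MeasurableSpace A] [MeasurableSingletonClass A]
  {a : Ω → A} {p : Ω → A → ℝ}

lemma ae_apply_ne_zero_of_condExp_ite_eq [Countable A] (hm : m ≤ m0) (ha : Measurable a)
    (hp : ∀ b, Measurable[m] fun ω ↦ p ω b)
    (hlaw : ∀ b, μ[(fun ω ↦ if a ω = b then (1 : ℝ) else 0) | m] =ᵐ[μ] fun ω ↦ p ω b) :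
    ∀ᵐ ω ∂μ, p ω (a ω) ≠ 0 := by
  filter_upwards [ae_all_iff.2 fun b ↦ ae_imp_ne_zero_of_condExp_ite_eq hm
    (ha (measurableSet_singleton b)) (hp b) (hlaw b)] with ω h
  exact h (a ω) rfl

variable [Fintype A] [StandardBorelSpace Ω]

lemma condExp_apply_mul_of_condIndepFun (hm : m ≤ m0) (ha : Measurable a)
    (hlaw : ∀ b, μ[(fun ω ↦ if a ω = b then (1 : ℝ) else 0) | m] =ᵐ[μ] fun ω ↦ p ω b)
    {X : Ω → ℝ} (hX : Measurable X) (hXint : Integrable X μ) (haX : CondIndepFun m hm a X μ)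
    {h : A → Ω → ℝ} (hh : ∀ b, Measurable[m] (h b)) {C : ℝ} (hC : ∀ b ω, |h b ω| ≤ C) :
    μ[fun ω ↦ h (a ω) ω * X ω | m] =ᵐ[μ] (fun ω ↦ ∑ b, p ω b * h b ω) * μ[X | m] := by
  set ind : A → Ω → ℝ := fun b ω ↦ if a ω = b then 1 else 0 with hind
  have ind_meas (b : A) : Measurable (ind b) :=
    Measurable.ite (ha (measurableSet_singleton b)) measurable_const measurable_const
  have ind_le (b : A) (ω : Ω) : ‖ind b ω‖ ≤ 1 := by
    simp only [hind]
    split_ifs <;> simp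
  have ind_int (b : A) : Integrable (ind b) μ :=
    .of_bound (ind_meas b).aestronglyMeasurable 1 (ae_of_all _ (ind_le b))
  have indX_int (b : A) : Integrable (ind b * X) μ :=
    hXint.bdd_mul (ind_meas b).aestronglyMeasurable (ae_of_all _ (ind_le b))
  have ind_indep (b : A) : CondIndepFun m hm (ind b) X μ :=
    haX.comp (φ := fun b' ↦ if b' = b then (1 : ℝ) else 0) (measurable_of_finite _) measurable_id
  have apply_eq_sum : (fun ω ↦ h (a ω) ω * X ω) = ∑ b, h b * (ind b * X) := by
    ext ω
    simp [hind]
  have term_int (b : A) : Integrable (h b * (ind b * X)) μ :=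
    (indX_int b).bdd_mul ((hh b).mono hm le_rfl).aestronglyMeasurable (ae_of_all _ (hC b))
  rw [apply_eq_sum]
  filter_upwards [condExp_finsetSum (s := univ) (fun b _ ↦ term_int b) m,
    ae_all_iff.2 fun b ↦ condExp_stronglyMeasurable_mul_of_bound hm (hh b).stronglyMeasurable
      (indX_int b) C (ae_of_all _ (hC b)),
    ae_all_iff.2 fun b ↦ condExp_mul_of_condIndepFun hm (ind_meas b) hX (ind_int b) hXint
      (indX_int b) (ind_indep b),
    ae_all_iff.2 hlaw] with ω sum_eq pull_out factor law
  rw [sum_eq, Finset.sum_apply, Pi.mul_apply, Finset.sum_mul]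
  refine Finset.sum_congr rfl fun b _ ↦ ?_
  rw [pull_out, Pi.mul_apply, factor, Pi.mul_apply, law]
  ring

-- `h (a ω) ω` has conditional mean zero, hence so has its product with the independent `X`.
lemma condExp_add_mul_apply_eq_zero (hm : m ≤ m0) (ha : Measurable a)
    (hlaw : ∀ b, μ[(fun ω ↦ if a ω = b then (1 : ℝ) else 0) | m] =ᵐ[μ] fun ω ↦ p ω b)
    {X : Ω → ℝ} (hX : Measurable X) (hXint : Integrable X μ) (haX : CondIndepFun m hm a X μ)
    {g : Ω → ℝ} (hg : Measurable[m] g) {B : ℝ} (hB : ∀ ω, |g ω| ≤ B)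
    {h : A → Ω → ℝ} (hh : ∀ b, Measurable[m] (h b)) {C : ℝ} (hC : ∀ b ω, |h b ω| ≤ C)
    (hmean : ∀ ω, ∑ b, p ω b * h b ω = 0) :
    μ[fun ω ↦ (g ω + X ω) * h (a ω) ω | m] =ᵐ[μ] 0 := by
  have comp_meas : Measurable fun ω ↦ h (a ω) ω :=
    measurable_apply_self (fun b ↦ (hh b).mono hm le_rfl) ha
  have comp_le : ∀ᵐ ω ∂μ, ‖h (a ω) ω‖ ≤ C := ae_of_all _ fun ω ↦ hC (a ω) ω
  have comp_int : Integrable (fun ω ↦ h (a ω) ω) μ :=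
    .of_bound comp_meas.aestronglyMeasurable C comp_le
  have gh_int : Integrable (g * fun ω ↦ h (a ω) ω) μ :=
    comp_int.bdd_mul (hg.mono hm le_rfl).aestronglyMeasurable (ae_of_all _ hB)
  have hX_int : Integrable (fun ω ↦ h (a ω) ω * X ω) μ :=
    hXint.bdd_mul comp_meas.aestronglyMeasurable comp_le
  have split_eq : (fun ω ↦ (g ω + X ω) * h (a ω) ω)
      = (g * fun ω ↦ h (a ω) ω) + fun ω ↦ h (a ω) ω * X ω := by
    ext ω
    simp only [Pi.add_apply, Pi.mul_apply]
    ring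
  have comp_centered := condExp_apply_mul_of_condIndepFun hm ha hlaw measurable_const
    (integrable_const (1 : ℝ)) (condIndepFun_const_right a 1) hh hC
  simp only [mul_one] at comp_centered
  rw [split_eq]
  filter_upwards [condExp_add gh_int hX_int m,
    condExp_stronglyMeasurable_mul_of_bound hm hg.stronglyMeasurable comp_int B (ae_of_all _ hB),
    comp_centered, condExp_apply_mul_of_condIndepFun hm ha hlaw hX hXint haX hh hC]
    with ω add_eq pull_out h_eq hX_eq
  rw [add_eq, Pi.add_apply, pull_out, hX_eq, Pi.mul_apply, Pi.mul_apply, h_eq, Pi.mul_apply,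
    hmean]
  simp

lemma condExp_reward_mul_centered_eq_zero {n : Type*} [Fintype n] (hm : m ≤ m0)
    (ha : Measurable a) (hpmeas : ∀ b, Measurable[m] fun ω ↦ p ω b)
    (hp : ∀ ω, p ω ∈ stdSimplex ℝ A)
    (hlaw : ∀ b, μ[(fun ω ↦ if a ω = b then (1 : ℝ) else 0) | m] =ᵐ[μ] fun ω ↦ p ω b)
    {x : A → Ω → n → ℝ} (hx : ∀ b, Measurable[m] (x b)) {R : ℝ}
    (hR : ∀ b ω, x b ω ⬝ᵥ x b ω ≤ R) {g X : Ω → ℝ} (hg : Measurable[m] g) {B : ℝ}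
    (hB : ∀ ω, |g ω| ≤ B) (hX : Measurable X) (hXint : Integrable X μ)
    (haX : CondIndepFun m hm a X μ) (w : n → ℝ) :
    μ[fun ω ↦ (g ω + X ω) * (w ⬝ᵥ (x (a ω) ω - weightedMean (p ω) (x · ω))) | m] =ᵐ[μ] 0 := by
  have dot_le (b : A) (ω : Ω) : |w ⬝ᵥ x b ω| ≤ √(w ⬝ᵥ w) * √R :=
    (abs_dotProduct_le_sqrt_mul_sqrt _ _).trans (by gcongr; exact hR b ω)
  have mean_meas := measurable_weightedMean hpmeas hx
  refine condExp_add_mul_apply_eq_zero hm ha hlaw hX hXint haX hg hB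
    (h := fun b ω ↦ w ⬝ᵥ (x b ω - weightedMean (p ω) (x · ω)))
    (C := √(w ⬝ᵥ w) * √R + √(w ⬝ᵥ w) * √R) (fun b ↦ ?_) (fun b ω ↦ ?_)
    fun ω ↦ sum_mul_dotProduct_sub_weightedMean (hp ω).2 w
  · have := hx b
    unfold dotProduct
    fun_prop
  · rw [dotProduct_sub]
    exact (abs_sub _ _).trans
      (add_le_add (dot_le b ω) (abs_dotProduct_weightedMean_le (hp ω) fun b ↦ dot_le b ω))

end Sampling

section Orthogonalized

variable {Ω : Type*} {m0 : MeasurableSpace Ω} [StandardBorelSpace Ω] {μ : Measure Ω}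
  [IsProbabilityMeasure μ] {ℱ : Filtration ℕ m0} {n : Type*} [Fintype n] [DecidableEq n]
  [Nonempty n] {A : Type*} [Fintype A] [DecidableEq A] [MeasurableSpace A]
  [MeasurableSingletonClass A] {z : ℕ → A → Ω → n → ℝ} {f ξ : ℕ → Ω → ℝ} {a : ℕ → Ω → A}
  {π : ℕ → Ω → A → ℝ}

lemma measure_orthogonalized_error_gt_le
    (hzmeas : ∀ t b, Measurable[ℱ t] (z t b)) {R : ℝ} (hz : ∀ t b ω, z t b ω ⬝ᵥ z t b ω ≤ R)
    (hfmeas : ∀ t, Measurable[ℱ t] (f t)) {F : ℝ} (hf : ∀ t ω, |f t ω| ≤ F)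
    (hξmeas : ∀ t, Measurable[ℱ (t + 1)] (ξ t)) {σ : ℝ} (hξ : ∀ t ω, |ξ t ω| ≤ σ)
    (hameas : ∀ t, Measurable[ℱ (t + 1)] (a t))
    (hπmeas : ∀ t b, Measurable[ℱ t] fun ω ↦ π t ω b)
    (hπ : ∀ t ω, IsUniformOnPair (π t ω))
    (hπlaw : ∀ t b, μ[(fun ω ↦ if a t ω = b then (1 : ℝ) else 0) | ℱ t] =ᵐ[μ] fun ω ↦ π t ω b)
    (haξ : ∀ t, CondIndepFun (ℱ t) (ℱ.le t) (a t) (ξ t) μ)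
    (θ : n → ℝ) {c : ℝ} (hc : 0 < c) (hθc : √(θ ⬝ᵥ θ) * √R + F + σ ≤ c)
    {v : ℕ → Ω → n → ℝ} (hv : ∀ t ω, v t ω = z t (a t ω) ω - weightedMean (π t ω) (z t · ω))
    {ρ p : ℝ} (hρ : 0 < ρ) (hp : 0 < p) {t : ℕ} {Γ : Ω → Matrix n n ℝ}
    (hΓ : ∀ ω, Γ ω = ρ • (1 : Matrix n n ℝ) + ∑ τ ∈ range t, vecMulVec (v τ ω) (v τ ω)) :
    μ {ω | √ρ * √(θ ⬝ᵥ θ) +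
        c * √(Fintype.card n * Real.log (1 + t * R / (Fintype.card n * ρ)) + 2 * Real.log (1 / p))
      < mahalanobisNorm (Γ ω)
          ((Γ ω)⁻¹ *ᵥ (∑ τ ∈ range t, (θ ⬝ᵥ z τ (a τ ω) ω + f τ ω + ξ τ ω) • v τ ω) - θ)}
      ≤ ENNReal.ofReal p := by
  set g : ℕ → Ω → ℝ := fun τ ω ↦ θ ⬝ᵥ weightedMean (π τ ω) (z τ · ω) + f τ ω with hg
  have simplex (τ ω) := (hπ τ ω).mem_stdSimplex
  have mean_meas (τ) := measurable_weightedMean (hπmeas τ) (hzmeas τ)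
  have g_meas (τ) : Measurable[ℱ τ] (g τ) := by
    have := hfmeas τ
    have := mean_meas τ
    unfold g dotProduct
    fun_prop
  have g_le (τ ω) : |g τ ω| ≤ √(θ ⬝ᵥ θ) * √R + F :=
    (abs_add_le _ _).trans <| add_le_add (abs_dotProduct_weightedMean_le (simplex τ ω) fun b ↦
      (abs_dotProduct_le_sqrt_mul_sqrt _ _).trans (by gcongr; exact hz τ b ω)) (hf τ ω)
  have v_meas (τ) : Measurable[ℱ (τ + 1)] (v τ) := by
    have hle := ℱ.mono τ.le_succ
    rw [funext (hv τ)]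
    exact (measurable_apply_self (fun b ↦ (hzmeas τ b).mono hle le_rfl) (hameas τ)).sub
      ((mean_meas τ).mono hle le_rfl)
  have ξ_meas (τ) : Measurable (ξ τ) := (hξmeas τ).mono (ℱ.le _) le_rfl
  have a_meas (τ) : Measurable (a τ) := (hameas τ).mono (ℱ.le _) le_rfl
  have reward_eq (τ ω) : θ ⬝ᵥ z τ (a τ ω) ω + f τ ω + ξ τ ω
      = θ ⬝ᵥ v τ ω + (g τ ω + ξ τ ω) := by
    rw [hv, dotProduct_sub, hg]
    ring
  simp only [reward_eq]
  refine measure_ridge_error_gt_le (ℱ := ℱ) v_meas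
    (fun τ ↦ ((g_meas τ).mono (ℱ.mono τ.le_succ) le_rfl).add (hξmeas τ)) hc
    (fun τ ω ↦ (abs_add_le _ _).trans ((add_le_add (g_le τ ω) (hξ τ ω)).trans hθc))
    (fun τ ↦ measurable_weightedCov_apply (hπmeas τ) (hzmeas τ))
    (fun τ ω ↦ posSemidef_weightedCov (simplex τ ω).1)
    (fun τ ω ↦ trace_weightedCov_le (simplex τ ω) fun b ↦ hz τ b ω) (fun τ ↦ ?_) (fun τ w ↦ ?_)
    hρ hp θ hΓ
  · filter_upwards [ae_apply_ne_zero_of_condExp_ite_eq (ℱ.le τ) (a_meas τ) (hπmeas τ) (hπlaw τ)]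
      with ω hω
    rw [hv]
    exact (hπ τ ω).vecMulVec_sub_weightedMean (x := (z τ · ω)) hω
  · simp only [hv]
    exact condExp_reward_mul_centered_eq_zero (ℱ.le τ) (a_meas τ) (hπmeas τ) (simplex τ)
      (hπlaw τ) (hzmeas τ) (hz τ) (g_meas τ) (g_le τ) (ξ_meas τ)
      (.of_bound (ξ_meas τ).aestronglyMeasurable σ (ae_of_all _ (hξ τ))) (haξ τ) w

end Orthogonalized

lemma ofReal_one_sub_le_measure_forall_lt {Ω : Type*} {m0 : MeasurableSpace Ω} {μ : Measure Ω}
    [IsProbabilityMeasure μ] {T : ℕ} {δ : ℝ} (hδ : 0 ≤ δ) {P : ℕ → Ω → Prop}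
    (h : ∀ t < T, μ {ω | ¬P t ω} ≤ ENNReal.ofReal (δ / T)) :
    ENNReal.ofReal (1 - δ) ≤ μ {ω | ∀ t < T, P t ω} := by
  have fail_le : μ {ω | ∀ t < T, P t ω}ᶜ ≤ ENNReal.ofReal δ := by
    calc μ {ω | ∀ t < T, P t ω}ᶜ ≤ μ (⋃ t ∈ range T, {ω | ¬P t ω}) :=
          measure_mono fun ω hω ↦ by simpa using hω
      _ ≤ ∑ t ∈ range T, μ {ω | ¬P t ω} := measure_biUnion_finset_le _ _
      _ ≤ ∑ _t ∈ range T, ENNReal.ofReal (δ / T) :=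
          Finset.sum_le_sum fun t ht ↦ h t (Finset.mem_range.1 ht)
      _ = ENNReal.ofReal (T * (δ / T)) := by
          rw [Finset.sum_const, Finset.card_range, nsmul_eq_mul,
            ENNReal.ofReal_mul T.cast_nonneg, ENNReal.ofReal_natCast]
      _ ≤ ENNReal.ofReal δ := ENNReal.ofReal_le_ofReal (by
          rw [mul_div_left_comm]
          exact mul_le_of_le_one_right hδ (div_self_le_one _))
  rw [ENNReal.ofReal_sub _ hδ, ENNReal.ofReal_one, tsub_le_iff_right]
  calc 1 = μ Set.univ := measure_univ.symm
    _ ≤ μ {ω | ∀ t < T, P t ω} + μ {ω | ∀ t < T, P t ω}ᶜ := measure_univ_le_add_compl _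
    _ ≤ μ {ω | ∀ t < T, P t ω} + ENNReal.ofReal δ := by gcongr

lemma three_mul_sqrt_log_le {d t T : ℕ} (htT : t ≤ T) {ρ δ : ℝ} (hρ : 0 < ρ) :
    3 * √(d * Real.log (1 + t / (d * ρ)) + 2 * Real.log (1 / (δ / T)))
      ≤ √(9 * d * Real.log (1 + T / (d * ρ)) + 18 * Real.log (T / δ)) := by
  have log_le : d * Real.log (1 + t / (d * ρ)) ≤ d * Real.log (1 + T / (d * ρ)) := by gcongr
  have sqrt_nine : √(9 : ℝ) = 3 := by
    rw [show (9 : ℝ) = 3 ^ 2 by norm_num, Real.sqrt_sq three_pos.le]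
  rw [← sqrt_nine, ← Real.sqrt_mul (by norm_num), one_div_div]
  exact Real.sqrt_le_sqrt (by linarith)

theorem stmt_13_general {Ω : Type*} {m0 : MeasurableSpace Ω} [StandardBorelSpace Ω]
    (μ : Measure Ω) [IsProbabilityMeasure μ]
    (ℱ : Filtration ℕ m0)
    {A : Type*} [Fintype A] [DecidableEq A] [MeasurableSpace A] [MeasurableSingletonClass A]
    {d T : ℕ} (hd : 0 < d)
    (δ lam : ℝ) (hδ : 0 < δ) (hlam : 0 < lam)
    (θ : Fin d → ℝ) (hθ : Real.sqrt (θ ⬝ᵥ θ) ≤ 1)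
    (z : ℕ → A → Ω → (Fin d → ℝ)) (f : ℕ → Ω → ℝ) (ξ : ℕ → Ω → ℝ)
    (hzmeas : ∀ t b, Measurable[ℱ t] (z t b))
    (hzbd : ∀ t b ω, Real.sqrt (z t b ω ⬝ᵥ z t b ω) ≤ 1)
    (hfmeas : ∀ t, Measurable[ℱ t] (f t))
    (hfbd : ∀ t ω, f t ω ∈ Set.Icc (-1 : ℝ) 1)
    (hξmeas : ∀ t, Measurable[ℱ (t + 1)] (ξ t))
    (hξbd : ∀ t ω, |ξ t ω| ≤ 1)
    (a : ℕ → Ω → A) (π : ℕ → Ω → A → ℝ)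
    (hameas : ∀ t, Measurable[ℱ (t + 1)] (a t))
    (hπmeas : ∀ t b, Measurable[ℱ t] (fun ω => π t ω b))
    (hπlaw : ∀ t b, μ[(fun ω => if a t ω = b then (1 : ℝ) else 0) | ℱ t]
      =ᵐ[μ] fun ω => π t ω b)
    (hπ : ∀ t ω, IsUniformOnPair (π t ω))
    (haξ : ∀ t, CondIndepFun (ℱ t) (ℱ.le t) (a t) (ξ t) μ)
    (r : ℕ → Ω → ℝ) (hr : ∀ t ω, r t ω = θ ⬝ᵥ z t (a t ω) ω + f t ω + ξ t ω)
    (mu : ℕ → Ω → (Fin d → ℝ)) (hmu : ∀ t ω, mu t ω = ∑ b, π t ω b • z t b ω)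
    (Γ : ℕ → Ω → Matrix (Fin d) (Fin d) ℝ)
    (hΓ : ∀ t ω, Γ t ω = lam • (1 : Matrix (Fin d) (Fin d) ℝ) +
      ∑ τ ∈ Finset.range t,
        vecMulVec (z τ (a τ ω) ω - mu τ ω) (z τ (a τ ω) ω - mu τ ω))
    (θhat : ℕ → Ω → (Fin d → ℝ))
    (hθhat : ∀ t ω, θhat t ω =
      (Γ t ω)⁻¹.mulVec (∑ τ ∈ Finset.range t, r τ ω • (z τ (a τ ω) ω - mu τ ω))) :
    ENNReal.ofReal (1 - δ) ≤
      μ {ω | ∀ t < T,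
        Real.sqrt ((θhat t ω - θ) ⬝ᵥ (Γ t ω).mulVec (θhat t ω - θ)) ≤
          Real.sqrt lam +
            Real.sqrt (9 * d * Real.log (1 + T / (d * lam)) + 18 * Real.log (T / δ))} := by
  have : Nonempty (Fin d) := Fin.pos_iff_nonempty.1 hd
  refine ofReal_one_sub_le_measure_forall_lt hδ.le fun t htT ↦ ?_
  have hT : (0 : ℝ) < T := mod_cast t.zero_le.trans_lt htT
  refine (measure_mono fun ω hω ↦ ?_).trans
    (measure_orthogonalized_error_gt_le hzmeas (fun t b ω ↦ Real.sqrt_le_one.1 (hzbd t b ω))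
      hfmeas (fun t ω ↦ abs_le.2 (hfbd t ω)) hξmeas hξbd hameas hπmeas hπ hπlaw haξ θ three_pos
      (by rw [Real.sqrt_one]; linarith) (v := fun t ω ↦ z t (a t ω) ω - mu t ω)
      (fun t ω ↦ by rw [hmu, weightedMean]) hlam (div_pos hδ hT) (hΓ t))
  simp only [Set.mem_ofPred_eq, not_le] at hω ⊢
  rw [hθhat] at hω
  simp only [hr] at hω
  refine lt_of_le_of_lt (add_le_add ?_ ?_) hω
  · exact mul_le_of_le_one_right (Real.sqrt_nonneg lam) hθ
  · rw [Fintype.card_fin, mul_one]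
    exact three_mul_sqrt_log_le htT.le hlam

/-- **Concentration of the orthogonalized estimator, two-action case (Lemma: estimator).**
Semiparametric contextual bandit with two actions under the environment and boundedness
assumptions.  At each round `t` the learner samples `a_t ∼ π_t`, where `π_t` is an
`F_t`-measurable distribution that is either a point mass or uniform over the two actions;
rewards are `r_t = ⟨θ, z_{t,a_t}⟩ + f_t + ξ_t`.  With `μ_t = E_{a∼π_t}[z_{t,a}]`,
`Γ_t = λI + ∑_{τ<t}(z_τ−μ_τ)(z_τ−μ_τ)ᵀ`, `θ̂_t = Γ_t⁻¹ ∑_{τ<t}(z_τ−μ_τ)r_τ`, and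
`γ(T) = √λ + √(9d log(1+T/(dλ)) + 18 log(T/δ))`, with probability at least `1 − δ`,
`‖θ̂_t − θ‖_{Γ_t} ≤ γ(T)` simultaneously for all rounds `t` (i.e. all sample sizes `< T`). -/
theorem stmt_13 {Ω : Type*} {m0 : MeasurableSpace Ω} [StandardBorelSpace Ω] [Nonempty Ω]
    (μ : Measure Ω) [IsProbabilityMeasure μ]
    (ℱ : Filtration ℕ m0)
    {A : Type*} [Fintype A] [DecidableEq A] [Nonempty A] [MeasurableSpace A] [MeasurableSingletonClass A]
    (hcard : Fintype.card A = 2)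
    {d T : ℕ} (hd : 0 < d)
    (δ lam : ℝ) (hδ : 0 < δ) (hδ1 : δ < 1) (hlam : 0 < lam)
    (θ : Fin d → ℝ) (hθ : Real.sqrt (θ ⬝ᵥ θ) ≤ 1)
    -- context features, confounder and noise: adapted, adversarial, bounded
    (z : ℕ → A → Ω → (Fin d → ℝ)) (f : ℕ → Ω → ℝ) (ξ : ℕ → Ω → ℝ)
    (hzmeas : ∀ t b, Measurable[ℱ t] (z t b))
    (hzbd : ∀ t b ω, Real.sqrt (z t b ω ⬝ᵥ z t b ω) ≤ 1)
    (hfmeas : ∀ t, Measurable[ℱ t] (f t))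
    (hfbd : ∀ t ω, f t ω ∈ Set.Icc (-1 : ℝ) 1)
    (hξmeas : ∀ t, Measurable[ℱ (t + 1)] (ξ t))
    (hξbd : ∀ t ω, |ξ t ω| ≤ 1)
    (hξcent : ∀ t, μ[ξ t | ℱ t] =ᵐ[μ] 0)
    -- the action and its conditional distribution
    (a : ℕ → Ω → A) (π : ℕ → Ω → A → ℝ)
    (hameas : ∀ t, Measurable[ℱ (t + 1)] (a t))
    (hπmeas : ∀ t b, Measurable[ℱ t] (fun ω => π t ω b))
    (hπprob : ∀ t ω, (∀ b, 0 ≤ π t ω b) ∧ (∑ b, π t ω b) = 1)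
    (hπlaw : ∀ t b, μ[(fun ω => if a t ω = b then (1 : ℝ) else 0) | ℱ t]
      =ᵐ[μ] fun ω => π t ω b)
    (hπshape : ∀ t ω, (∃ b, ∀ b', π t ω b' = if b' = b then 1 else 0) ∨
      (∀ b', π t ω b' = 1 / 2))
    (haξ : ∀ t, CondIndepFun (ℱ t) (ℱ.le t) (a t) (ξ t) μ)
    -- rewards, mean features, and the orthogonalized estimator
    (r : ℕ → Ω → ℝ) (hr : ∀ t ω, r t ω = θ ⬝ᵥ z t (a t ω) ω + f t ω + ξ t ω)
    (mu : ℕ → Ω → (Fin d → ℝ)) (hmu : ∀ t ω, mu t ω = ∑ b, π t ω b • z t b ω)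
    (Γ : ℕ → Ω → Matrix (Fin d) (Fin d) ℝ)
    (hΓ : ∀ t ω, Γ t ω = lam • (1 : Matrix (Fin d) (Fin d) ℝ) +
      ∑ τ ∈ Finset.range t,
        vecMulVec (z τ (a τ ω) ω - mu τ ω) (z τ (a τ ω) ω - mu τ ω))
    (θhat : ℕ → Ω → (Fin d → ℝ))
    (hθhat : ∀ t ω, θhat t ω =
      (Γ t ω)⁻¹.mulVec (∑ τ ∈ Finset.range t, r τ ω • (z τ (a τ ω) ω - mu τ ω))) :
    ENNReal.ofReal (1 - δ) ≤
      μ {ω | ∀ t < T,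
        Real.sqrt ((θhat t ω - θ) ⬝ᵥ (Γ t ω).mulVec (θhat t ω - θ)) ≤
          Real.sqrt lam +
            Real.sqrt (9 * d * Real.log (1 + T / (d * lam)) + 18 * Real.log (T / δ))} := by
  exact stmt_13_general μ ℱ hd δ lam hδ hlam θ hθ z f ξ hzmeas hzbd hfmeas hfbd hξmeas hξbd a π
    hameas hπmeas hπlaw (fun t ω ↦ isUniformOnPair_of_card_eq_two hcard (hπshape t ω)) haξ r hr mu
    hmu Γ hΓ θhat hθhat
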